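/- Suppose v ∈ L¹_loc(ℝ³) is nonnegative and radial and has a finite scattering length a(v). Then for every R ≥ 0 the scattering lengths a(v_{≤R}) and a(v_{>R}) exist and are finite, and one has 0 ≤ max{ a(v_{≤R}), a(v_{>R}) } ≤ a(v) ≤ a(v_{≤R}) + a(v_{>R}). -/

import Mathlib

open MeasureTheory Filter Real Set
open scoped ENNReal Topology

noncomputable section

abbrev E3 := EuclideanSpace ℝ (Fin 3)

/-- `v` is radial. -/
def Radial {α : Type*} (v : E3 → α) : Prop :=
  ∀ x y : E3, ‖x‖ = ‖y‖ → v x = v y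

/-- The scattering energy functional `∫_{B(0,Rt)} (|∇φ|² + ½ v |φ|²)`. -/
def scatteringFunctional (v : E3 → ℝ≥0∞) (Rt : ℝ) (φ : E3 → ℝ) : ℝ≥0∞ :=
  ∫⁻ x in Metric.ball (0 : E3) Rt,
    ENNReal.ofReal (‖fderiv ℝ φ x‖ ^ 2) + (1 / 2) * v x * ENNReal.ofReal ((φ x) ^ 2)

/-- `a` is the scattering length of the potential `v` of range `R`:
`4πa/(1 − a/R̃)` equals, for every `R̃ > R`, the infimum of the scattering functional
over functions equal to `1` on the sphere `{|x| = R̃}`. -/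
def IsScatteringLength (v : E3 → ℝ≥0∞) (R a : ℝ) : Prop :=
  a ∈ Icc 0 R ∧
  ∀ Rt : ℝ, R < Rt →
    ENNReal.ofReal (4 * π * a / (1 - a / Rt)) =
      ⨅ φ : {φ : E3 → ℝ // ContDiff ℝ 1 φ ∧ ∀ x : E3, ‖x‖ = Rt → φ x = 1},
        scatteringFunctional v Rt φ.1


/-- The truncation `v_{≤R} = v · 1_{|x| ≤ R}`. -/
def truncLe (v : E3 → ℝ≥0∞) (R : ℝ) : E3 → ℝ≥0∞ := fun x => if ‖x‖ ≤ R then v x else 0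

/-- The tail `v_{>R} = v · 1_{|x| > R}`. -/
def truncGt (v : E3 → ℝ≥0∞) (R : ℝ) : E3 → ℝ≥0∞ := fun x => if R < ‖x‖ then v x else 0

/-- A potential with possibly infinite range has scattering length `a` if all its
truncations `v_{≤R}` have a scattering length and these converge to `a` as `R → ∞`. -/
def HasScatteringLengthGen (v : E3 → ℝ≥0∞) (a : ℝ) : Prop :=
  ∃ A : ℝ → ℝ,
    (∀ R : ℝ, 0 ≤ R → IsScatteringLength (truncLe v R) R (A R)) ∧
    Tendsto A atTop (𝓝 a)

/-!
Everything reduces to one-dimensional energies. By polar coordinates, the energy of a `C¹` function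
on the ball of radius `t` is at least the average over rays of the radial energy
`∫₀ᵗ (r² f'² + q f²) dr`, `q = r² v / 2`, of its restrictions; conversely a radial profile gives a
trial function after replacing `r` by `√(r² + δ²)`, which removes the corner at the origin. So the
infimum in the definition of the scattering length is `4π · radialMin q t`
(`iInf_scatteringFunctional`).

Three properties of `radialMin` then give the theorem.

* It is monotone in the potential (`radialMin_mono`).
* It is subadditive in the potential (`radialMin_add_le`): if `f₁`, `f₂` are trial profiles for
  `q₁`, `q₂`, then `min |f₁| |f₂|`, suitably smoothed, is one for `q₁ + q₂` and costs at most the sum.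
* Beyond the range of the potential it obeys the series law for resistors,
  `1 / radialMin q t = 1 / radialMin q s + (1 / s - 1 / t)` (`radialMin_series`), because the optimal
  continuation across a shell without potential is harmonic. This says exactly that
  `radialMin q t = b / (1 - b / t)` with `b` independent of `t`
  (`exists_radial_scatteringLength`), so the truncated tails of `v` have scattering lengths.

The truncation `v_{≤R}` has a scattering length by hypothesis. By monotonicity the scattering lengths
of the truncated tails increase with the outer cutoff and stay below `a`, hence converge. As `t → ∞`,
`b / (1 - b / t) → b`, so subadditivity of `radialMin` passes to the scattering lengths of
truncations, and then to the limit.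
-/

/-! ### The radial energy and its minimum -/

/-- The energy `∫₀ᵗ (r² f'(r)² + q(r) f(r)²) dr` of a radial profile `f`. For a potential with
profile `ρ` one takes `q(r) = r² ρ(r) / 2`; the factor `4π` of polar coordinates is left out. -/
def radialEnergy (q : ℝ → ℝ) (t : ℝ) (f : ℝ → ℝ) : ℝ :=
  ∫ r in (0 : ℝ)..t, (r ^ 2 * (deriv f r) ^ 2 + q r * f r ^ 2)

/-- The infimum of the radial energy on `[0, t]` among `C¹` profiles with `f t = 1`. -/
def radialMin (q : ℝ → ℝ) (t : ℝ) : ℝ :=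
  ⨅ f : {f : ℝ → ℝ // ContDiff ℝ 1 f ∧ f t = 1}, radialEnergy q t f.1

/-- The weights `q` allowed in `radialEnergy`: nonnegative and integrable on every `[0, t]`. -/
structure IsWeight (q : ℝ → ℝ) : Prop where
  nonneg : ∀ r, 0 ≤ q r
  integrable : ∀ t, 0 ≤ t → IntervalIntegrable q volume 0 t

lemma IsWeight.add {q₁ q₂ : ℝ → ℝ} (h₁ : IsWeight q₁) (h₂ : IsWeight q₂) :
    IsWeight (fun r => q₁ r + q₂ r) :=
  ⟨fun r => add_nonneg (h₁.nonneg r) (h₂.nonneg r),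
    fun t ht => (h₁.integrable t ht).add (h₂.integrable t ht)⟩

lemma IsWeight.integrable_on {q : ℝ → ℝ} (hq : IsWeight q) {s t : ℝ} (hs : 0 ≤ s) (ht : 0 ≤ t) :
    IntervalIntegrable q volume s t :=
  (hq.integrable s hs).symm.trans (hq.integrable t ht)

lemma IsWeight.integrable_energy {q : ℝ → ℝ} (hq : IsWeight q) {f : ℝ → ℝ}
    (hf : ContDiff ℝ 1 f) {s t : ℝ} (hs : 0 ≤ s) (ht : 0 ≤ t) :
    IntervalIntegrable (fun r => r ^ 2 * (deriv f r) ^ 2 + q r * f r ^ 2) volume s t := by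
  have h1 : Continuous (deriv f) := hf.continuous_deriv le_rfl
  have h2 : Continuous f := hf.continuous
  refine IntervalIntegrable.add ?_ ?_
  · exact Continuous.intervalIntegrable (by fun_prop) _ _
  · exact (hq.integrable_on hs ht).mul_continuousOn (by fun_prop)

lemma radialEnergy_nonneg {q : ℝ → ℝ} (hq : IsWeight q) {t : ℝ} (ht : 0 ≤ t) (f : ℝ → ℝ) :
    0 ≤ radialEnergy q t f :=
  intervalIntegral.integral_nonneg ht fun r _ => by
    have := hq.nonneg r
    positivity

lemma radialMin_nonneg {q : ℝ → ℝ} (hq : IsWeight q) {t : ℝ} (ht : 0 ≤ t) :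
    0 ≤ radialMin q t :=
  Real.iInf_nonneg fun f => radialEnergy_nonneg hq ht f.1

lemma radialMin_le {q : ℝ → ℝ} (hq : IsWeight q) {t : ℝ} (ht : 0 ≤ t) {f : ℝ → ℝ}
    (hf : ContDiff ℝ 1 f) (h1 : f t = 1) : radialMin q t ≤ radialEnergy q t f :=
  ciInf_le (f := fun f : {f : ℝ → ℝ // ContDiff ℝ 1 f ∧ f t = 1} => radialEnergy q t f.1)
    ⟨0, by rintro _ ⟨f, rfl⟩; exact radialEnergy_nonneg hq ht f.1⟩ ⟨f, hf, h1⟩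

lemma radialEnergy_const_mul (q : ℝ → ℝ) (t : ℝ) (f : ℝ → ℝ) (c : ℝ) :
    radialEnergy q t (fun r => c * f r) = c ^ 2 * radialEnergy q t f := by
  unfold radialEnergy
  rw [← intervalIntegral.integral_const_mul]
  refine intervalIntegral.integral_congr fun r _ => ?_
  simp only [deriv_const_mul_field]
  ring

/-- Homogeneous form of `radialMin_le`, without normalization of `f` at `t`. -/
lemma radialMin_mul_sq_le {q : ℝ → ℝ} (hq : IsWeight q) {t : ℝ} (ht : 0 ≤ t) {f : ℝ → ℝ}
    (hf : ContDiff ℝ 1 f) : radialMin q t * f t ^ 2 ≤ radialEnergy q t f := by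
  by_cases h : f t = 0
  · simpa [h] using radialEnergy_nonneg hq ht f
  · have := radialMin_le hq ht (f := fun r => (f t)⁻¹ * f r) (contDiff_const.mul hf)
      (inv_mul_cancel₀ h)
    rw [radialEnergy_const_mul, inv_pow, inv_mul_eq_div, le_div_iff₀ (by positivity)] at this
    exact this

lemma exists_radialEnergy_lt (q : ℝ → ℝ) (t : ℝ) {b : ℝ} (hb : radialMin q t < b) :
    ∃ f : ℝ → ℝ, ContDiff ℝ 1 f ∧ f t = 1 ∧ radialEnergy q t f < b := by
  have : Nonempty {f : ℝ → ℝ // ContDiff ℝ 1 f ∧ f t = 1} :=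
    ⟨⟨fun _ => 1, contDiff_const, rfl⟩⟩
  obtain ⟨f, hf⟩ := exists_lt_of_ciInf_lt hb
  exact ⟨f.1, f.2.1, f.2.2, hf⟩

lemma radialMin_mono {q₁ q₂ : ℝ → ℝ} (h₁ : IsWeight q₁) (h₂ : IsWeight q₂) {t : ℝ} (ht : 0 ≤ t)
    (h : ∀ r, q₁ r ≤ q₂ r) : radialMin q₁ t ≤ radialMin q₂ t := by
  refine le_of_forall_gt fun b hb => ?_
  obtain ⟨f, hf, hft, hfb⟩ := exists_radialEnergy_lt q₂ t hb
  refine lt_of_le_of_lt ((radialMin_le h₁ ht hf hft).trans ?_) hfb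
  refine intervalIntegral.integral_mono_on ht (h₁.integrable_energy hf le_rfl ht)
    (h₂.integrable_energy hf le_rfl ht) fun r _ => ?_
  gcongr
  exact h r

/-! ### Subadditivity in the potential -/

/-- A smooth surrogate for `min |f₁| |f₂|`: with `Fᵢ = √(fᵢ² + ε²)`, the profile
`(F₁ + F₂ - √((F₁ - F₂)² + ε²)) / 2` satisfies the bounds that `min |f₁| |f₂|` satisfies, up to an
error `ε²`. -/
lemma exists_softMin {f₁ f₂ : ℝ → ℝ} (h₁ : ContDiff ℝ 1 f₁) (h₂ : ContDiff ℝ 1 f₂) {t : ℝ}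
    (ht₁ : f₁ t = 1) (ht₂ : f₂ t = 1) {ε : ℝ} (hε : 0 < ε) :
    ∃ g : ℝ → ℝ, ContDiff ℝ 1 g ∧ g t = √(1 + ε ^ 2) - ε / 2 ∧
      (∀ r, (deriv g r) ^ 2 ≤ (deriv f₁ r) ^ 2 + (deriv f₂ r) ^ 2) ∧
      (∀ r, g r ^ 2 ≤ f₁ r ^ 2 + ε ^ 2) ∧ ∀ r, g r ^ 2 ≤ f₂ r ^ 2 + ε ^ 2 := by
  have key : ∀ f : ℝ → ℝ, ContDiff ℝ 1 f → ∃ F : ℝ → ℝ, ContDiff ℝ 1 F ∧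
      (∀ r, F r = √(f r ^ 2 + ε ^ 2)) ∧ (∀ r, ε ≤ F r) ∧ (∀ r, F r ^ 2 = f r ^ 2 + ε ^ 2) ∧
      ∀ r, (deriv F r) ^ 2 ≤ (deriv f r) ^ 2 := by
    intro f hf
    have hne : ∀ r, f r ^ 2 + ε ^ 2 ≠ 0 := fun r => by positivity
    refine ⟨fun r => √(f r ^ 2 + ε ^ 2), ((hf.pow 2).add contDiff_const).sqrt hne,
      fun _ => rfl, fun r => Real.le_sqrt_of_sq_le (by nlinarith [sq_nonneg (f r)]),
      fun r => Real.sq_sqrt (by positivity), fun r => ?_⟩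
    have hd : HasDerivAt f (deriv f r) r := (hf.differentiable one_ne_zero r).hasDerivAt
    have hD := ((hd.pow 2).add_const (ε ^ 2)).sqrt (hne r)
    have hD' : deriv (fun r => √(f r ^ 2 + ε ^ 2)) r = _ := hD.deriv
    rw [hD']
    simp only [Pi.pow_apply]
    rw [div_pow, div_le_iff₀ (by positivity), mul_pow, mul_pow (2 : ℝ),
      Real.sq_sqrt (by positivity)]
    norm_num
    nlinarith [mul_nonneg (sq_nonneg (deriv f r)) (sq_nonneg ε)]
  obtain ⟨F, hF, hFv, hFε, hFsq, hFd⟩ := key f₁ h₁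
  obtain ⟨G, hG, hGv, hGε, hGsq, hGd⟩ := key f₂ h₂
  have hne : ∀ r, (F r - G r) ^ 2 + ε ^ 2 ≠ 0 := fun r => by positivity
  -- `0 ≤ g ≤ min F G`; the lower bound uses `F, G ≥ ε`.
  have hS : ∀ r, √((F r - G r) ^ 2 + ε ^ 2) ≤ F r + G r := fun r =>
    Real.sqrt_le_iff.2 ⟨by linarith [hFε r, hGε r], by
      nlinarith [mul_le_mul (hFε r) (hGε r) hε.le (hε.le.trans (hFε r))]⟩
  have hA : ∀ r, |F r - G r| ≤ √((F r - G r) ^ 2 + ε ^ 2) := fun r =>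
    Real.abs_le_sqrt (by nlinarith [sq_nonneg ε])
  refine ⟨fun r => (F r + G r - √((F r - G r) ^ 2 + ε ^ 2)) / 2,
    ((hF.add hG).sub ((((hF.sub hG).pow 2).add contDiff_const).sqrt hne)).div_const 2,
    ?_, fun r => ?_, fun r => ?_, fun r => ?_⟩
  · simp only [hFv, hGv, ht₁, ht₂, sub_self]
    rw [show (0 : ℝ) ^ 2 + ε ^ 2 = ε ^ 2 by ring, Real.sqrt_sq hε.le]
    norm_num
    ring
  · have hf : HasDerivAt F (deriv F r) r := (hF.differentiable one_ne_zero r).hasDerivAt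
    have hg : HasDerivAt G (deriv G r) r := (hG.differentiable one_ne_zero r).hasDerivAt
    have hD := ((hf.add hg).sub ((((hf.sub hg).pow 2).add_const (ε ^ 2)).sqrt (hne r))).div_const 2
    have hD' : deriv (fun r => (F r + G r - √((F r - G r) ^ 2 + ε ^ 2)) / 2) r = _ := hD.deriv
    rw [hD']
    simp only [Pi.sub_apply, Pi.pow_apply]
    set N := √((F r - G r) ^ 2 + ε ^ 2) with hN
    have hNpos : 0 < N := Real.sqrt_pos.2 (by positivity)
    set S := (F r - G r) / N with hSdef
    have hS1 : S ^ 2 ≤ 1 := by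
      rw [sq_le_one_iff_abs_le_one, hSdef, abs_div, abs_of_pos hNpos, div_le_one hNpos]
      exact hA r
    have e : (deriv F r + deriv G r - (2 : ℕ) * (F r - G r) ^ (2 - 1) * (deriv F r - deriv G r) /
        (2 * N)) / 2 = ((1 - S) * deriv F r + (1 + S) * deriv G r) / 2 := by
      rw [hSdef]
      field_simp
      norm_num
      ring
    rw [e]
    -- Cauchy–Schwarz with `((1 - S)² + (1 + S)²) / 4 = (1 + S²) / 2 ≤ 1`.
    nlinarith [hFd r, hGd r, sq_nonneg ((1 + S) * deriv F r - (1 - S) * deriv G r),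
      mul_nonneg (sub_nonneg.2 hS1) (add_nonneg (sq_nonneg (deriv F r)) (sq_nonneg (deriv G r)))]
  · rw [← hFsq]
    exact pow_le_pow_left₀ (by linarith [hS r])
      (by linarith [neg_abs_le (F r - G r), hA r]) 2
  · rw [← hGsq]
    exact pow_le_pow_left₀ (by linarith [hS r])
      (by linarith [le_abs_self (F r - G r), hA r]) 2

/-- The minimal energy is subadditive in the potential: `min |f₁| |f₂|` is a trial profile for
`q₁ + q₂` whose energy is at most the sum of those of `f₁` and `f₂`. -/
lemma radialMin_add_le {q₁ q₂ : ℝ → ℝ} (h₁ : IsWeight q₁) (h₂ : IsWeight q₂) {t : ℝ}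
    (ht : 0 ≤ t) :
    radialMin (fun r => q₁ r + q₂ r) t ≤ radialMin q₁ t + radialMin q₂ t := by
  suffices H : ∀ f₁ f₂ : ℝ → ℝ, ContDiff ℝ 1 f₁ → ContDiff ℝ 1 f₂ → f₁ t = 1 → f₂ t = 1 →
      radialMin (fun r => q₁ r + q₂ r) t ≤ radialEnergy q₁ t f₁ + radialEnergy q₂ t f₂ by
    refine le_of_forall_pos_le_add fun η hη => ?_
    obtain ⟨f₁, hf₁, ht₁, hl₁⟩ := exists_radialEnergy_lt q₁ t
      (show radialMin q₁ t < radialMin q₁ t + η / 2 by linarith)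
    obtain ⟨f₂, hf₂, ht₂, hl₂⟩ := exists_radialEnergy_lt q₂ t
      (show radialMin q₂ t < radialMin q₂ t + η / 2 by linarith)
    linarith [H f₁ f₂ hf₁ hf₂ ht₁ ht₂]
  intro f₁ f₂ hf₁ hf₂ ht₁ ht₂
  have hq := h₁.add h₂
  set Q : ℝ := ∫ r in (0 : ℝ)..t, (q₁ r + q₂ r) with hQ
  have step : ∀ ε : ℝ, 0 < ε → radialMin (fun r => q₁ r + q₂ r) t * (√(1 + ε ^ 2) - ε / 2) ^ 2 ≤
      radialEnergy q₁ t f₁ + radialEnergy q₂ t f₂ + ε ^ 2 * Q := by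
    intro ε hε
    obtain ⟨g, hg, hgt, hgd, hg₁, hg₂⟩ := exists_softMin hf₁ hf₂ ht₁ ht₂ hε
    rw [← hgt]
    refine (radialMin_mul_sq_le hq ht hg).trans ?_
    have i₁ := h₁.integrable_energy hf₁ le_rfl ht
    have i₂ := h₂.integrable_energy hf₂ le_rfl ht
    have i₃ : IntervalIntegrable (fun r => ε ^ 2 * (q₁ r + q₂ r)) volume 0 t :=
      (hq.integrable t ht).const_mul _
    rw [hQ, ← intervalIntegral.integral_const_mul, radialEnergy, radialEnergy, radialEnergy,
      ← intervalIntegral.integral_add i₁ i₂, ← intervalIntegral.integral_add (i₁.add i₂) i₃]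
    refine intervalIntegral.integral_mono_on ht (hq.integrable_energy hg le_rfl ht)
      ((i₁.add i₂).add i₃) fun r _ => ?_
    nlinarith [mul_le_mul_of_nonneg_left (hgd r) (sq_nonneg r),
      mul_le_mul_of_nonneg_left (hg₁ r) (h₁.nonneg r),
      mul_le_mul_of_nonneg_left (hg₂ r) (h₂.nonneg r)]
  have hlim : Tendsto (fun ε : ℝ => radialMin (fun r => q₁ r + q₂ r) t *
      (√(1 + ε ^ 2) - ε / 2) ^ 2) (𝓝[>] 0) (𝓝 (radialMin (fun r => q₁ r + q₂ r) t)) := by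
    have : Continuous fun ε : ℝ => radialMin (fun r => q₁ r + q₂ r) t *
      (√(1 + ε ^ 2) - ε / 2) ^ 2 := by fun_prop
    simpa using (this.tendsto 0).mono_left nhdsWithin_le_nhds
  have hlim' : Tendsto (fun ε : ℝ => radialEnergy q₁ t f₁ + radialEnergy q₂ t f₂ + ε ^ 2 * Q)
      (𝓝[>] 0) (𝓝 (radialEnergy q₁ t f₁ + radialEnergy q₂ t f₂)) := by
    have : Continuous fun ε : ℝ =>
      radialEnergy q₁ t f₁ + radialEnergy q₂ t f₂ + ε ^ 2 * Q := by fun_prop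
    simpa using (this.tendsto 0).mono_left nhdsWithin_le_nhds
  exact le_of_tendsto_of_tendsto hlim hlim' (by
    filter_upwards [self_mem_nhdsWithin] with ε hε using step ε hε)

/-! ### Dependence of the minimal energy on the outer radius -/

/-- On a shell `[s, t]` the kinetic energy is at least that of the harmonic profile `α + β / r`
with the same boundary values. -/
lemma shell_energy_ge {f : ℝ → ℝ} (hf : ContDiff ℝ 1 f) {s t : ℝ} (hs : 0 < s) (hst : s < t) :
    (f t - f s) ^ 2 * (s * t / (t - s)) ≤ ∫ r in s..t, r ^ 2 * (deriv f r) ^ 2 := by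
  have ht : 0 < t := hs.trans hst
  have h1 : Continuous (deriv f) := hf.continuous_deriv le_rfl
  set k := s * t / (t - s) with hk
  set l := (f t - f s) * k with hl
  have hpos : ∀ r ∈ uIcc s t, 0 < r := fun r hr => by
    rw [uIcc_of_le hst.le] at hr
    exact hs.trans_le hr.1
  have i1 : IntervalIntegrable (fun r => r ^ 2 * (deriv f r) ^ 2) volume s t :=
    Continuous.intervalIntegrable (by fun_prop) _ _
  have i2 : IntervalIntegrable (fun r => 2 * l * deriv f r) volume s t :=
    Continuous.intervalIntegrable (by fun_prop) _ _
  have hd : ∀ r ∈ uIcc s t, HasDerivAt (fun r : ℝ => -r⁻¹) ((r ^ 2)⁻¹) r := fun r hr =>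
    (hasDerivAt_inv (hpos r hr).ne').neg.congr_deriv (neg_neg _)
  have i3' : IntervalIntegrable (fun r : ℝ => (r ^ 2)⁻¹) volume s t :=
    ContinuousOn.intervalIntegrable (ContinuousOn.inv₀ (by fun_prop)
      fun r hr => pow_ne_zero 2 (hpos r hr).ne')
  have e3 : ∫ r in s..t, (r ^ 2)⁻¹ = k⁻¹ := by
    rw [intervalIntegral.integral_eq_sub_of_hasDerivAt hd i3', hk]
    field_simp
    ring
  have e2 : ∫ r in s..t, deriv f r = f t - f s :=
    intervalIntegral.integral_deriv_eq_sub (fun r _ => hf.differentiable one_ne_zero r)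
      (h1.intervalIntegrable _ _)
  have hkpos : 0 < k := by
    have := sub_pos.2 hst
    positivity
  -- Integrate `0 ≤ (r f' - l / r)²`.
  have h0 : ∫ r in s..t, (2 * l * deriv f r - l ^ 2 * (r ^ 2)⁻¹) ≤
      ∫ r in s..t, r ^ 2 * (deriv f r) ^ 2 := by
    refine intervalIntegral.integral_mono_on hst.le (i2.sub (i3'.const_mul _)) i1 fun r hr => ?_
    have hr : 0 < r := hs.trans_le hr.1
    have : r ^ 2 * deriv f r ^ 2 - (2 * l * deriv f r - l ^ 2 * (r ^ 2)⁻¹) =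
        (r * deriv f r - l / r) ^ 2 := by
      field_simp
      ring
    nlinarith [sq_nonneg (r * deriv f r - l / r)]
  rw [intervalIntegral.integral_sub i2 (i3'.const_mul _), intervalIntegral.integral_const_mul,
    intervalIntegral.integral_const_mul, e2, e3] at h0
  refine le_trans (le_of_eq ?_) h0
  rw [hl]
  field_simp
  ring

/-- Lower half of the series law: a trial profile on `[0, t]` pays at least
`f(s)² · radialMin q s` on `[0, s]` and at least the harmonic energy on `[s, t]`. -/
lemma le_radialMin {q : ℝ → ℝ} (hq : IsWeight q) {s t : ℝ} (hs : 0 < s) (hst : s < t) :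
    radialMin q s * (s * t / (t - s)) / (radialMin q s + s * t / (t - s)) ≤ radialMin q t := by
  have ht : 0 < t := hs.trans hst
  set k := s * t / (t - s) with hk
  have hkpos : 0 < k := by
    have := sub_pos.2 hst
    positivity
  have hI := radialMin_nonneg hq hs.le
  refine le_of_forall_gt fun b hb => ?_
  obtain ⟨f, hf, hft, hfb⟩ := exists_radialEnergy_lt q t hb
  refine lt_of_le_of_lt ?_ hfb
  have h1 := radialMin_mul_sq_le hq hs.le hf
  have h2 := shell_energy_ge hf hs hst
  have h3 : radialEnergy q s f + ∫ r in s..t, r ^ 2 * (deriv f r) ^ 2 ≤ radialEnergy q t f := by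
    have c1 : Continuous (deriv f) := hf.continuous_deriv le_rfl
    rw [radialEnergy, radialEnergy, ← intervalIntegral.integral_add_adjacent_intervals
      (hq.integrable_energy hf le_rfl hs.le) (hq.integrable_energy hf hs.le ht.le)]
    gcongr
    refine intervalIntegral.integral_mono_on hst.le
      (Continuous.intervalIntegrable (by fun_prop) _ _)
      (hq.integrable_energy hf hs.le ht.le) fun r _ => ?_
    nlinarith [mul_nonneg (hq.nonneg r) (sq_nonneg (f r))]
  rw [hft] at h2
  refine le_trans ?_ ((add_le_add h1 h2).trans h3)
  set I := radialMin q s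
  set x := f s
  rw [div_le_iff₀ (by positivity)]
  nlinarith [sq_nonneg ((I + k) * x - k)]

/-- A `C¹` profile that equals `c f` up to `s` and whose derivative beyond `s` passes, on
`[s, s + 1 / (n + 1)]`, from `c f'(s)` to the derivative `m / r²` of a harmonic profile. -/
lemma exists_glued {f : ℝ → ℝ} (hf : ContDiff ℝ 1 f) {s t : ℝ} (hs : 0 < s) (hst : s < t)
    (hfs : f s = 1) (c m : ℝ) :
    ∃ F : ℕ → ℝ → ℝ, (∀ n, ContDiff ℝ 1 (F n)) ∧ (∀ n, ∀ r ≤ s, F n r = c * f r) ∧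
      Tendsto (fun n => F n t) atTop (𝓝 (c + m * (s⁻¹ - t⁻¹))) ∧
      Tendsto (fun n => ∫ r in s..t, r ^ 2 * (deriv (F n) r) ^ 2) atTop
        (𝓝 (m ^ 2 * (s⁻¹ - t⁻¹))) := by
  have ht : 0 < t := hs.trans hst
  have h1 : Continuous (deriv f) := hf.continuous_deriv le_rfl
  -- the transition function, `0` up to `s` and `1` beyond `s + 1 / (n + 1)`
  let lam : ℕ → ℝ → ℝ := fun n r => max 0 (min 1 ((n + 1) * (r - s)))
  let g : ℕ → ℝ → ℝ := fun n r =>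
    (1 - lam n r) * (c * deriv f (min r s)) + lam n r * (m / (max r s) ^ 2)
  have hlamc : ∀ n, Continuous (lam n) := fun n => by fun_prop
  have hlam0 : ∀ n r, 0 ≤ lam n r := fun n r => le_max_left _ _
  have hlam1 : ∀ n r, lam n r ≤ 1 := fun n r => max_le zero_le_one (min_le_left _ _)
  have hmax : ∀ r, 0 < max r s := fun r => hs.trans_le (le_max_right _ _)
  have hgc : ∀ n, Continuous (g n) := fun n => by
    refine Continuous.add (by fun_prop) ((hlamc n).mul (continuous_const.div (by fun_prop) ?_))
    exact fun r => pow_ne_zero 2 (hmax r).ne'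
  have hgs : ∀ n, ∀ r ≤ s, g n r = c * deriv f r := fun n r hr => by
    have : lam n r = 0 := by
      refine max_eq_left ((min_le_right _ _).trans ?_)
      exact mul_nonpos_of_nonneg_of_nonpos (by positivity) (by linarith)
    simp only [g, this, min_eq_left hr]
    ring
  have hbound : ∀ n, ∀ r, s ≤ r → |g n r| ≤ |c * deriv f s| + |m / s ^ 2| := by
    intro n r hr
    simp only [g, min_eq_right hr, max_eq_left hr]
    refine (abs_add_le _ _).trans ?_
    rw [abs_mul, abs_mul (lam n r), abs_of_nonneg (sub_nonneg.2 (hlam1 n r)),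
      abs_of_nonneg (hlam0 n r)]
    have hle : |m / r ^ 2| ≤ |m / s ^ 2| := by
      rw [abs_div, abs_div, abs_of_pos (pow_pos hs 2), abs_of_pos (pow_pos (hs.trans_le hr) 2)]
      gcongr
    have a1 := mul_le_mul_of_nonneg_right (sub_le_self 1 (hlam0 n r)) (abs_nonneg (c * deriv f s))
    have a2 := mul_le_mul (hlam1 n r) hle (abs_nonneg _) zero_le_one
    linarith
  have hlim : ∀ r, s < r → Tendsto (fun n => g n r) atTop (𝓝 (m / r ^ 2)) := by
    intro r hr
    refine tendsto_const_nhds.congr' ?_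
    obtain ⟨N, hN⟩ := exists_nat_ge (1 / (r - s))
    filter_upwards [eventually_ge_atTop N] with n hn
    have hrs := sub_pos.2 hr
    have : lam n r = 1 := by
      have h' : (1 : ℝ) ≤ (n + 1) * (r - s) := by
        rw [div_le_iff₀ hrs] at hN
        have : (N : ℝ) ≤ n := by exact_mod_cast hn
        nlinarith
      simp only [lam, min_eq_left h']
      exact max_eq_right zero_le_one
    simp only [g, this, max_eq_left hr.le]
    ring
  have hpos : ∀ r ∈ uIcc s t, 0 < r := fun r hr => by
    rw [uIcc_of_le hst.le] at hr
    exact hs.trans_le hr.1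
  have e3 : ∫ r in s..t, (r ^ 2)⁻¹ = s⁻¹ - t⁻¹ := by
    rw [intervalIntegral.integral_eq_sub_of_hasDerivAt (f := fun r : ℝ => -r⁻¹)]
    · ring
    · intro r hr
      exact (hasDerivAt_inv (hpos r hr).ne').neg.congr_deriv (neg_neg _)
    · exact ContinuousOn.intervalIntegrable (ContinuousOn.inv₀ (by fun_prop)
        fun r hr => pow_ne_zero 2 (hpos r hr).ne')
  have hderiv : ∀ n r, HasDerivAt (fun r => c + ∫ x in s..r, g n x) (g n r) r := fun n r =>
    ((hgc n).integral_hasStrictDerivAt s r).hasDerivAt.const_add c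
  refine ⟨fun n r => c + ∫ x in s..r, g n x, fun n => ?_, fun n r hr => ?_, ?_, ?_⟩
  · rw [contDiff_one_iff_deriv]
    refine ⟨fun r => (hderiv n r).differentiableAt, ?_⟩
    rw [show deriv (fun r => c + ∫ x in s..r, g n x) = g n from funext fun r => (hderiv n r).deriv]
    exact hgc n
  · have : ∫ x in s..r, g n x = ∫ x in s..r, c * deriv f x := by
      refine intervalIntegral.integral_congr fun x hx => hgs n x ?_
      rw [uIcc_of_ge hr] at hx
      exact hx.2
    simp only [this]
    rw [intervalIntegral.integral_const_mul, intervalIntegral.integral_deriv_eq_sub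
      (fun r _ => hf.differentiable one_ne_zero r) (h1.intervalIntegrable _ _), hfs]
    ring
  · refine Tendsto.const_add c ?_
    rw [← e3, ← intervalIntegral.integral_const_mul]
    refine intervalIntegral.tendsto_integral_filter_of_dominated_convergence
      (fun _ => |c * deriv f s| + |m / s ^ 2|) ?_ ?_ intervalIntegrable_const ?_
    · exact Eventually.of_forall fun n => (hgc n).aestronglyMeasurable
    · refine Eventually.of_forall fun n => Eventually.of_forall fun r hr => ?_
      rw [uIoc_of_le hst.le] at hr
      exact hbound n r hr.1.le
    · refine Eventually.of_forall fun r hr => ?_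
      rw [uIoc_of_le hst.le] at hr
      simpa [div_eq_mul_inv] using hlim r hr.1
  · have hd : ∀ n r, deriv (fun r => c + ∫ x in s..r, g n x) r = g n r :=
      fun n r => (hderiv n r).deriv
    simp only [hd]
    rw [← e3, ← intervalIntegral.integral_const_mul]
    refine intervalIntegral.tendsto_integral_filter_of_dominated_convergence
      (fun _ => t ^ 2 * (|c * deriv f s| + |m / s ^ 2|) ^ 2) ?_ ?_ intervalIntegrable_const ?_
    · exact Eventually.of_forall fun n =>
        ((continuous_id.pow 2).mul ((hgc n).pow 2)).aestronglyMeasurable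
    · refine Eventually.of_forall fun n => Eventually.of_forall fun r hr => ?_
      rw [uIoc_of_le hst.le] at hr
      have hr0 : 0 < r := hs.trans hr.1
      rw [Real.norm_eq_abs, abs_of_nonneg (by positivity), ← sq_abs (g n r)]
      gcongr
      · exact hr.2
      · exact hbound n r hr.1.le
    · refine Eventually.of_forall fun r hr => ?_
      rw [uIoc_of_le hst.le] at hr
      have hr0 : 0 < r := hs.trans hr.1
      have := ((hlim r hr.1).pow 2).const_mul (r ^ 2)
      convert this using 2
      field_simp

/-- Upper half of the series law: if `q` vanishes on `[s, t]`, a multiple of a near-minimizer on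
`[0, s]` can be continued by a harmonic profile on `[s, t]`. -/
lemma radialMin_le_glue {q : ℝ → ℝ} (hq : IsWeight q) {s t : ℝ} (hs : 0 < s) (hst : s < t)
    (h0 : ∀ r, s ≤ r → q r = 0) (c : ℝ) :
    radialMin q t ≤ c ^ 2 * radialMin q s + (1 - c) ^ 2 * (s * t / (t - s)) := by
  have ht : 0 < t := hs.trans hst
  have hts := sub_pos.2 hst
  suffices H : ∀ f : ℝ → ℝ, ContDiff ℝ 1 f → f s = 1 →
      radialMin q t ≤ c ^ 2 * radialEnergy q s f + (1 - c) ^ 2 * (s * t / (t - s)) by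
    refine le_of_forall_pos_le_add fun η hη => ?_
    obtain ⟨f, hf, hfs, hfl⟩ := exists_radialEnergy_lt q s
      (show radialMin q s < radialMin q s + η / (c ^ 2 + 1) from
        lt_add_of_pos_right _ (by positivity))
    refine (H f hf hfs).trans ?_
    have h1 := mul_le_mul_of_nonneg_left hfl.le (sq_nonneg c)
    have h2 : c ^ 2 * (η / (c ^ 2 + 1)) ≤ η := by
      rw [mul_div_assoc', div_le_iff₀ (by positivity)]
      nlinarith
    linarith
  intro f hf hfs
  obtain ⟨F, hF, hFs, hFt, hFe⟩ :=
    exists_glued hf hs hst hfs c ((1 - c) * (s * t / (t - s)))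
  have hk : (1 - c) * (s * t / (t - s)) * (s⁻¹ - t⁻¹) = 1 - c := by
    field_simp
  have hE : ∀ n, radialEnergy q t (F n) =
      c ^ 2 * radialEnergy q s f + ∫ r in s..t, r ^ 2 * (deriv (F n) r) ^ 2 := by
    intro n
    rw [← radialEnergy_const_mul, radialEnergy, radialEnergy,
      ← intervalIntegral.integral_add_adjacent_intervals
      (hq.integrable_energy (hF n) le_rfl hs.le) (hq.integrable_energy (hF n) hs.le ht.le)]
    congr 1
    · -- the integrands agree for `r < s`, where `F n` is locally equal to `c f`
      refine intervalIntegral.integral_congr_ae ?_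
      have : ∀ᵐ r : ℝ, r ≠ s := by simp [ae_iff]
      filter_upwards [this] with r hr hr'
      rw [uIoc_of_le hs.le] at hr'
      have hlt : r < s := lt_of_le_of_ne hr'.2 hr
      have : F n =ᶠ[𝓝 r] fun r => c * f r := by
        filter_upwards [Iio_mem_nhds hlt] with x hx using hFs n x (le_of_lt hx)
      rw [this.deriv_eq, hFs n r hr'.2]
    · refine intervalIntegral.integral_congr fun r hr => ?_
      rw [uIcc_of_le hst.le] at hr
      simp [h0 r hr.1]
  have L1 : Tendsto (fun n => radialMin q t * F n t ^ 2) atTop (𝓝 (radialMin q t)) := by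
    have := (hFt.pow 2).const_mul (radialMin q t)
    rw [hk] at this
    simpa using this
  have L2 := hFe.const_add (c ^ 2 * radialEnergy q s f)
  refine (le_of_tendsto_of_tendsto' L1 L2 fun n => ?_).trans (le_of_eq ?_)
  · rw [← hE]
    exact radialMin_mul_sq_le hq ht.le (hF n)
  · congr 1
    linear_combination ((1 - c) * (s * t / (t - s))) * hk

/-- Series law: beyond the range of the potential, `1 / radialMin q t = 1 / radialMin q s +
(1 / s - 1 / t)`, written without inverses. -/
lemma radialMin_series {q : ℝ → ℝ} (hq : IsWeight q) {s t : ℝ} (hs : 0 < s) (hst : s < t)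
    (h0 : ∀ r, s ≤ r → q r = 0) :
    radialMin q t =
      radialMin q s * (s * t / (t - s)) / (radialMin q s + s * t / (t - s)) := by
  refine le_antisymm ?_ (le_radialMin hq hs hst)
  have ht : 0 < t := hs.trans hst
  have hkpos : 0 < s * t / (t - s) := by
    have := sub_pos.2 hst
    positivity
  have hI := radialMin_nonneg hq hs.le
  set k := s * t / (t - s)
  refine (radialMin_le_glue hq hs hst h0 (k / (radialMin q s + k))).trans (le_of_eq ?_)
  change _ + _ * k = _
  field_simp
  ring

/-- A weight vanishing beyond `R'` has a scattering length `b`, in the sense that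
`radialMin q t = b / (1 - b / t)` for all `t > R'`, as soon as its minimal energy is at most the
value `a / (1 - a / t)` belonging to some scattering length `a ≤ R'`; then also `b ≤ a`. -/
lemma exists_radial_scatteringLength {q : ℝ → ℝ} (hq : IsWeight q) {R' a : ℝ} (ha : a ∈ Icc 0 R')
    (h0 : ∀ r, R' < r → q r = 0) (hle : ∀ t, R' < t → radialMin q t ≤ a / (1 - a / t)) :
    ∃ b ∈ Icc 0 a, ∀ t, R' < t → radialMin q t = b / (1 - b / t) := by
  have hR' : 0 ≤ R' := ha.1.trans ha.2
  set b : ℝ → ℝ := fun t => radialMin q t / (1 + radialMin q t / t) with hb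
  have hbt : ∀ t, R' < t → radialMin q t = b t / (1 - b t / t) := by
    intro t ht
    have ht0 : 0 < t := hR'.trans_lt ht
    have hI := radialMin_nonneg hq ht0.le
    have : 1 - b t / t = 1 / (1 + radialMin q t / t) := by
      rw [hb]
      field_simp
      ring
    rw [this, hb]
    field_simp
  have hconst : ∀ s t, R' < s → s < t → b t = b s := by
    intro s t hs hst
    have hs0 : 0 < s := hR'.trans_lt hs
    have ht0 : 0 < t := hs0.trans hst
    have hts := sub_pos.2 hst
    have hI := radialMin_nonneg hq hs0.le
    have hk : 0 < s * t / (t - s) := by positivity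
    simp only [hb]
    rw [radialMin_series hq hs0 hst fun r hr => h0 r (hs.trans_le hr)]
    set I := radialMin q s
    rw [div_eq_div_iff (by positivity) (by positivity)]
    field_simp
    ring
  have hconst' : ∀ t, R' < t → b t = b (R' + 1) := by
    intro t ht
    rcases lt_trichotomy t (R' + 1) with h | h | h
    · exact (hconst _ _ ht h).symm
    · rw [h]
    · exact hconst _ _ (by linarith) h
  have hR1 : 0 < R' + 1 := by linarith
  have hI1 := radialMin_nonneg hq hR1.le
  refine ⟨b (R' + 1), ⟨by simp only [hb]; positivity, ?_⟩, fun t ht => ?_⟩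
  · have h := hle (R' + 1) (by linarith)
    have ha1 : 0 < R' + 1 - a := by linarith [ha.2]
    have e : a / (1 - a / (R' + 1)) = a * (R' + 1) / (R' + 1 - a) := by
      field_simp
    rw [e, le_div_iff₀ ha1] at h
    simp only [hb]
    rw [div_le_iff₀ (by positivity)]
    have : a * (1 + radialMin q (R' + 1) / (R' + 1)) =
        (a * (R' + 1) + a * radialMin q (R' + 1)) / (R' + 1) := by
      field_simp
    rw [this, le_div_iff₀ hR1]
    nlinarith
  · rw [← hconst' t ht]
    exact hbt t ht

/-! ### Reduction of the scattering functional to radial profiles -/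

/-- Integration in polar coordinates on `E3`. -/
lemma lintegral_polar {F : E3 → ℝ≥0∞} (hF : Measurable F) :
    ∫⁻ x, F x = ∫⁻ ω, (∫⁻ r in Ioi (0 : ℝ), ENNReal.ofReal (r ^ 2) * F (r • (ω : E3)))
      ∂(volume : Measure E3).toSphere := by
  have hdim : Module.finrank ℝ E3 - 1 = 2 := by simp
  have hm := (volume : Measure E3).measurePreserving_homeomorphUnitSphereProd
  rw [hdim] at hm
  have hcont : Continuous fun p : Metric.sphere (0 : E3) 1 × Ioi (0 : ℝ) =>
      (p.2 : ℝ) • (p.1 : E3) := by fun_prop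
  calc ∫⁻ x, F x = ∫⁻ x in ({0}ᶜ : Set E3), F x := by rw [restrict_compl_singleton]
    _ = ∫⁻ x : ({0}ᶜ : Set E3), F x ∂((volume : Measure E3).comap Subtype.val) :=
        (lintegral_subtype_comap (measurableSet_singleton _).compl F).symm
    _ = ∫⁻ x : ({0}ᶜ : Set E3), F (((homeomorphUnitSphereProd E3 x).2 : ℝ) •
          ((homeomorphUnitSphereProd E3 x).1 : E3))
          ∂((volume : Measure E3).comap Subtype.val) := by
        refine lintegral_congr fun x => ?_
        have : ‖(x : E3)‖ ≠ 0 := norm_ne_zero_iff.2 x.2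
        simp [smul_smul, this]
    _ = ∫⁻ p : Metric.sphere (0 : E3) 1 × Ioi (0 : ℝ), F ((p.2 : ℝ) • (p.1 : E3))
          ∂((volume : Measure E3).toSphere.prod (Measure.volumeIoiPow 2)) :=
        hm.lintegral_comp (hF.comp hcont.measurable)
    _ = ∫⁻ ω, (∫⁻ r : Ioi (0 : ℝ), F ((r : ℝ) • (ω : E3)) ∂(Measure.volumeIoiPow 2))
          ∂(volume : Measure E3).toSphere :=
        lintegral_prod _ (hF.comp hcont.measurable).aemeasurable
    _ = _ := by
        refine lintegral_congr fun ω => ?_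
        have hray : Measurable fun r : ℝ => F (r • (ω : E3)) :=
          hF.comp (by fun_prop : Continuous fun r : ℝ => r • (ω : E3)).measurable
        have hdens : Measurable fun r : Ioi (0 : ℝ) => ENNReal.ofReal ((r : ℝ) ^ 2) := by fun_prop
        refine (lintegral_withDensity_eq_lintegral_mul _ hdens
          (hray.comp measurable_subtype_coe)).trans ?_
        exact lintegral_subtype_comap measurableSet_Ioi
          fun r : ℝ => ENNReal.ofReal (r ^ 2) * F (r • (ω : E3))

lemma toSphere_univ_E3 : (volume : Measure E3).toSphere univ = ENNReal.ofReal (4 * π) := by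
  rw [Measure.toSphere_apply_univ, EuclideanSpace.volume_ball_fin_three]
  simp only [finrank_euclideanSpace, Fintype.card_fin]
  rw [ENNReal.ofReal_one, one_pow, one_mul, ← ENNReal.ofReal_natCast,
    ← ENNReal.ofReal_mul (by norm_num)]
  congr 1
  norm_num
  ring

/-- The weight on `[0, ∞)` belonging to the radial potential `x ↦ ρ ‖x‖`. -/
def weightOf (ρ : ℝ → ℝ) : ℝ → ℝ := fun r => r ^ 2 * ρ r / 2

lemma lintegral_energy {q : ℝ → ℝ} (hq : IsWeight q) {f : ℝ → ℝ} (hf : ContDiff ℝ 1 f) {t : ℝ}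
    (ht : 0 ≤ t) : ∫⁻ r in Ioo 0 t, ENNReal.ofReal (r ^ 2 * (deriv f r) ^ 2 + q r * f r ^ 2) =
      ENNReal.ofReal (radialEnergy q t f) := by
  have hi := hq.integrable_energy hf le_rfl ht
  rw [intervalIntegrable_iff_integrableOn_Ioo_of_le ht] at hi
  rw [radialEnergy, intervalIntegral.integral_of_le ht, ← restrict_Ioo_eq_restrict_Ioc,
    ofReal_integral_eq_lintegral_ofReal hi]
  refine Eventually.of_forall fun r => ?_
  have := hq.nonneg r
  simp only [Pi.zero_apply]
  positivity

/-- The energy density of a profile, in the form in which it appears in `scatteringFunctional`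
multiplied by the polar density `r²`. -/
lemma polar_density (ρ : ℝ → ℝ) (hρ : ∀ r, 0 ≤ ρ r) (r a b : ℝ) :
    ENNReal.ofReal (r ^ 2) * (ENNReal.ofReal (a ^ 2) +
      (1 / 2) * ENNReal.ofReal (ρ r) * ENNReal.ofReal (b ^ 2)) =
      ENNReal.ofReal (r ^ 2 * a ^ 2 + weightOf ρ r * b ^ 2) := by
  have h2 : (1 / 2 : ℝ≥0∞) = ENNReal.ofReal (1 / 2) := by
    rw [ENNReal.ofReal_div_of_pos two_pos]
    simp
  have := hρ r
  rw [h2, ← ENNReal.ofReal_mul (by norm_num), ← ENNReal.ofReal_mul (by positivity),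
    ← ENNReal.ofReal_add (by positivity) (by positivity), ← ENNReal.ofReal_mul (by positivity)]
  congr 1
  simp only [weightOf]
  ring

lemma setLIntegral_polar {F : E3 → ℝ≥0∞} (hF : Measurable F) (t : ℝ) :
    ∫⁻ x in Metric.ball (0 : E3) t, F x =
      ∫⁻ ω, (∫⁻ r in Ioo 0 t, ENNReal.ofReal (r ^ 2) * F (r • (ω : E3)))
        ∂(volume : Measure E3).toSphere := by
  rw [← lintegral_indicator Metric.isOpen_ball.measurableSet,
    lintegral_polar (hF.indicator Metric.isOpen_ball.measurableSet)]
  refine lintegral_congr fun ω => ?_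
  rw [← Ioi_inter_Iio, inter_comm, ← Measure.restrict_restrict measurableSet_Iio,
    ← lintegral_indicator (s := Iio t) measurableSet_Iio]
  refine setLIntegral_congr_fun measurableSet_Ioi fun r hr => ?_
  have hω : ‖(ω : E3)‖ = 1 := by simp
  have hr' : ‖r • (ω : E3)‖ = r := by
    rw [norm_smul, hω, mul_one, Real.norm_eq_abs, abs_of_pos hr]
  by_cases h : r < t
  · rw [indicator_of_mem (by simpa [hr'] using h), indicator_of_mem (by simpa using h)]
  · rw [indicator_of_notMem (by simpa [hr'] using h), indicator_of_notMem (by simpa using h),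
      mul_zero]

/-- The scattering energy of a radial function is at most `4π` times that of its profile. -/
lemma scatteringFunctional_radial_le {ρ : ℝ → ℝ} (hm : Measurable ρ) (hρ : ∀ r, 0 ≤ ρ r)
    (hq : IsWeight (weightOf ρ)) {t : ℝ} (ht : 0 ≤ t) {G : ℝ → ℝ} (hG : ContDiff ℝ 1 G) :
    scatteringFunctional (fun x => ENNReal.ofReal (ρ ‖x‖)) t (fun x => G ‖x‖) ≤
      ENNReal.ofReal (4 * π * radialEnergy (weightOf ρ) t G) := by
  have hG' : Continuous (deriv G) := hG.continuous_deriv le_rfl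
  have hGc : Continuous G := hG.continuous
  have hgrad : ∀ x : E3, x ≠ 0 → ‖fderiv ℝ (fun x : E3 => G ‖x‖) x‖ ≤ |deriv G ‖x‖| := by
    intro x hx
    have hn : HasFDerivAt (fun x : E3 => ‖x‖) (fderiv ℝ (fun x : E3 => ‖x‖) x) x :=
      ((contDiffAt_norm ℝ hx).differentiableAt one_ne_zero).hasFDerivAt
    have hg : HasDerivAt G (deriv G ‖x‖) ‖x‖ := (hG.differentiable one_ne_zero _).hasDerivAt
    have hc := (hg.comp_hasFDerivAt x hn).fderiv
    have hc' : fderiv ℝ (fun x : E3 => G ‖x‖) x = deriv G ‖x‖ • fderiv ℝ (fun x : E3 => ‖x‖) x := hc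
    rw [hc', norm_smul, Real.norm_eq_abs]
    refine mul_le_of_le_one_right (abs_nonneg _) ?_
    simpa using norm_fderiv_le_of_lipschitz ℝ (lipschitzWith_one_norm (E := E3)) (x₀ := x)
  set F : E3 → ℝ≥0∞ := fun x => ENNReal.ofReal ((deriv G ‖x‖) ^ 2) +
    (1 / 2) * ENNReal.ofReal (ρ ‖x‖) * ENNReal.ofReal ((G ‖x‖) ^ 2) with hFdef
  have hF : Measurable F := by
    have : Measurable fun x : E3 => ρ ‖x‖ := hm.comp measurable_norm
    refine Measurable.add ?_ (Measurable.mul (this.ennreal_ofReal.const_mul _) ?_)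
    · exact (by fun_prop : Continuous fun x : E3 => (deriv G ‖x‖) ^ 2).measurable.ennreal_ofReal
    · exact (by fun_prop : Continuous fun x : E3 => (G ‖x‖) ^ 2).measurable.ennreal_ofReal
  calc scatteringFunctional (fun x => ENNReal.ofReal (ρ ‖x‖)) t (fun x => G ‖x‖)
      ≤ ∫⁻ x in Metric.ball (0 : E3) t, F x := by
        refine lintegral_mono_ae (ae_restrict_of_ae ?_)
        have : ∀ᵐ x : E3, x ≠ 0 := by simp [ae_iff]
        filter_upwards [this] with x hx
        simp only [hFdef]
        gcongr ENNReal.ofReal ?_ + _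
        rw [← sq_abs (deriv G ‖x‖)]
        gcongr
        exact hgrad x hx
    _ = ∫⁻ _ω : Metric.sphere (0 : E3) 1, ENNReal.ofReal (radialEnergy (weightOf ρ) t G)
          ∂(volume : Measure E3).toSphere := by
        rw [setLIntegral_polar hF]
        refine lintegral_congr fun ω => ?_
        rw [← lintegral_energy hq hG ht]
        refine setLIntegral_congr_fun measurableSet_Ioo fun r hr => ?_
        have hω : ‖(ω : E3)‖ = 1 := by simp
        have hr' : ‖r • (ω : E3)‖ = r := by
          rw [norm_smul, hω, mul_one, Real.norm_eq_abs, abs_of_pos hr.1]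
        simp only [hFdef, hr']
        exact polar_density ρ hρ r _ _
    _ = _ := by
        rw [lintegral_const, toSphere_univ_E3, mul_comm, ← ENNReal.ofReal_mul (by positivity)]

/-- Every `C¹` function on `E3` restricts to a `C¹` profile on each ray, and the derivative of
this profile is at most the norm of the gradient; hence the lower bound. -/
lemma le_scatteringFunctional {ρ : ℝ → ℝ} (hm : Measurable ρ) (hρ : ∀ r, 0 ≤ ρ r)
    (hq : IsWeight (weightOf ρ)) {t : ℝ} (ht : 0 ≤ t) {φ : E3 → ℝ} (hφ : ContDiff ℝ 1 φ)
    (h1 : ∀ x : E3, ‖x‖ = t → φ x = 1) :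
    ENNReal.ofReal (4 * π * radialMin (weightOf ρ) t) ≤
      scatteringFunctional (fun x => ENNReal.ofReal (ρ ‖x‖)) t φ := by
  have hφ' : Continuous (fderiv ℝ φ) := hφ.continuous_fderiv one_ne_zero
  have hφc : Continuous φ := hφ.continuous
  have hF : Measurable fun x : E3 => ENNReal.ofReal (‖fderiv ℝ φ x‖ ^ 2) +
      (1 / 2) * ENNReal.ofReal (ρ ‖x‖) * ENNReal.ofReal ((φ x) ^ 2) := by
    have : Measurable fun x : E3 => ρ ‖x‖ := hm.comp measurable_norm
    refine Measurable.add ?_ (Measurable.mul (this.ennreal_ofReal.const_mul _) ?_)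
    · exact (by fun_prop : Continuous fun x : E3 => ‖fderiv ℝ φ x‖ ^ 2).measurable.ennreal_ofReal
    · exact (by fun_prop : Continuous fun x : E3 => (φ x) ^ 2).measurable.ennreal_ofReal
  have e : ENNReal.ofReal (4 * π * radialMin (weightOf ρ) t) =
      ∫⁻ _ω : Metric.sphere (0 : E3) 1, ENNReal.ofReal (radialMin (weightOf ρ) t)
        ∂(volume : Measure E3).toSphere := by
    rw [lintegral_const, toSphere_univ_E3, mul_comm (ENNReal.ofReal _),
      ← ENNReal.ofReal_mul (by positivity)]
  rw [e, scatteringFunctional, setLIntegral_polar hF]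
  refine lintegral_mono fun ω => ?_
  have hω : ‖(ω : E3)‖ = 1 := by simp
  have hray : ContDiff ℝ 1 fun r : ℝ => φ (r • (ω : E3)) :=
    hφ.comp (contDiff_id.smul contDiff_const)
  have hrayt : φ (t • (ω : E3)) = 1 := h1 _ (by
    rw [norm_smul, hω, mul_one, Real.norm_eq_abs, abs_of_nonneg ht])
  have hderiv : ∀ r : ℝ, |deriv (fun r : ℝ => φ (r • (ω : E3))) r| ≤ ‖fderiv ℝ φ (r • (ω : E3))‖ := by
    intro r
    have hd : HasDerivAt (fun r : ℝ => r • (ω : E3)) ((1 : ℝ) • (ω : E3)) r :=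
      (hasDerivAt_id r).smul_const _
    have hD := ((hφ.differentiable one_ne_zero _).hasFDerivAt.comp_hasDerivAt r hd).deriv
    have hD' : deriv (fun r : ℝ => φ (r • (ω : E3))) r =
      fderiv ℝ φ (r • (ω : E3)) ((1 : ℝ) • (ω : E3)) := hD
    rw [hD', one_smul, ← Real.norm_eq_abs]
    exact ((fderiv ℝ φ (r • (ω : E3))).le_opNorm _).trans (by rw [hω, mul_one])
  refine (ENNReal.ofReal_le_ofReal (radialMin_le hq ht hray hrayt)).trans ?_
  rw [← lintegral_energy hq hray ht]
  refine setLIntegral_mono' measurableSet_Ioo fun r hr => ?_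
  have hr' : ‖r • (ω : E3)‖ = r := by
    rw [norm_smul, hω, mul_one, Real.norm_eq_abs, abs_of_pos hr.1]
  rw [← polar_density ρ hρ, hr']
  gcongr _ * (ENNReal.ofReal ?_ + _)
  rw [← sq_abs]
  gcongr
  exact hderiv r

/-- A `C¹` profile `f` need not give a `C¹` function `x ↦ f ‖x‖`, but `r ↦ f √(r² + δ²)` does, and
its energy converges to that of `f` as `δ → 0`. -/
lemma tendsto_radialEnergy_sqrt {q : ℝ → ℝ} (hq : IsWeight q) {t : ℝ} (ht : 0 ≤ t) {f : ℝ → ℝ}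
    (hf : ContDiff ℝ 1 f) :
    Tendsto (fun δ : ℝ => radialEnergy q t fun r => f √(r ^ 2 + δ ^ 2)) (𝓝[>] 0)
      (𝓝 (radialEnergy q t f)) := by
  have hf' : Continuous (deriv f) := hf.continuous_deriv le_rfl
  have hfc : Continuous f := hf.continuous
  have hd : ∀ δ : ℝ, 0 < δ → ∀ r, deriv (fun r => f √(r ^ 2 + δ ^ 2)) r =
      deriv f √(r ^ 2 + δ ^ 2) * (r / √(r ^ 2 + δ ^ 2)) := by
    intro δ hδ r
    have hne : r ^ 2 + δ ^ 2 ≠ 0 := by positivity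
    have h0 : HasDerivAt (fun r : ℝ => r ^ 2 + δ ^ 2) (2 * r) r := by
      simpa using (hasDerivAt_pow 2 r).add_const (δ ^ 2)
    have h2 : HasDerivAt (fun r : ℝ => √(r ^ 2 + δ ^ 2)) (2 * r / (2 * √(r ^ 2 + δ ^ 2))) r :=
      h0.sqrt hne
    have h3 : HasDerivAt f (deriv f √(r ^ 2 + δ ^ 2)) √(r ^ 2 + δ ^ 2) :=
      (hf.differentiable one_ne_zero _).hasDerivAt
    have h4 := (h3.comp r h2).deriv
    have h5 : deriv (fun r => f √(r ^ 2 + δ ^ 2)) r = _ := h4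
    rw [h5, mul_div_mul_left _ _ two_ne_zero]
  obtain ⟨M, hM⟩ := (isCompact_Icc (a := (0 : ℝ)) (b := t + 1)).exists_bound_of_continuousOn
    hfc.continuousOn
  obtain ⟨M', hM'⟩ := (isCompact_Icc (a := (0 : ℝ)) (b := t + 1)).exists_bound_of_continuousOn
    hf'.continuousOn
  have hev : ∀ᶠ δ : ℝ in 𝓝[>] 0, 0 < δ ∧ δ < 1 := by
    filter_upwards [Ioo_mem_nhdsGT (zero_lt_one' ℝ)] with δ hδ using hδ
  refine intervalIntegral.tendsto_integral_filter_of_dominated_convergence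
    (fun r => r ^ 2 * M' ^ 2 + q r * M ^ 2) ?_ ?_ ?_ ?_
  · filter_upwards [hev] with δ hδ
    have hne : ∀ r, r ^ 2 + δ ^ 2 ≠ 0 := fun r => by
      have := hδ.1
      positivity
    have hG : ContDiff ℝ 1 fun r => f √(r ^ 2 + δ ^ 2) :=
      hf.comp (((contDiff_id.pow 2).add contDiff_const).sqrt hne)
    rw [uIoc_of_le ht]
    exact (hq.integrable_energy hG le_rfl ht).1.aestronglyMeasurable
  · filter_upwards [hev] with δ hδ
    refine Eventually.of_forall fun r hr => ?_
    rw [uIoc_of_le ht] at hr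
    have hS : √(r ^ 2 + δ ^ 2) ∈ Icc 0 (t + 1) :=
      ⟨Real.sqrt_nonneg _, Real.sqrt_le_iff.2 ⟨by linarith, by nlinarith [hr.1, hr.2, hδ.1, hδ.2]⟩⟩
    have hSr : r ≤ √(r ^ 2 + δ ^ 2) := Real.le_sqrt_of_sq_le (by nlinarith [sq_nonneg δ])
    have h1 := hM _ hS
    have h2 := hM' _ hS
    rw [Real.norm_eq_abs] at h1 h2
    have hqr := hq.nonneg r
    rw [hd δ hδ.1, Real.norm_eq_abs, abs_of_nonneg (by positivity), mul_pow,
      ← sq_abs (deriv f _), ← sq_abs (f _)]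
    have h3 : (r / √(r ^ 2 + δ ^ 2)) ^ 2 ≤ 1 :=
      pow_le_one₀ (div_nonneg hr.1.le hS.1) (div_le_one_of_le₀ hSr hS.1)
    have h4 : |deriv f √(r ^ 2 + δ ^ 2)| ^ 2 * (r / √(r ^ 2 + δ ^ 2)) ^ 2 ≤ M' ^ 2 :=
      (mul_le_of_le_one_right (by positivity) h3).trans (by gcongr)
    gcongr
  · refine IntervalIntegrable.add ?_ ((hq.integrable t ht).mul_const _)
    exact Continuous.intervalIntegrable (by fun_prop) _ _
  · refine Eventually.of_forall fun r hr => ?_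
    rw [uIoc_of_le ht] at hr
    have hS : Tendsto (fun δ : ℝ => √(r ^ 2 + δ ^ 2)) (𝓝[>] 0) (𝓝 r) := by
      have : Continuous fun δ : ℝ => √(r ^ 2 + δ ^ 2) := by fun_prop
      have h := (this.tendsto 0).mono_left (nhdsWithin_le_nhds (s := Ioi 0))
      simpa [Real.sqrt_sq hr.1.le] using h
    have hlim : Tendsto (fun δ : ℝ => r ^ 2 * (deriv f √(r ^ 2 + δ ^ 2) *
        (r / √(r ^ 2 + δ ^ 2))) ^ 2 + q r * f √(r ^ 2 + δ ^ 2) ^ 2) (𝓝[>] 0)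
        (𝓝 (r ^ 2 * (deriv f r * (r / r)) ^ 2 + q r * f r ^ 2)) :=
      (((((hf'.tendsto r).comp hS).mul (tendsto_const_nhds.div hS hr.1.ne')).pow 2).const_mul
        _).add ((((hfc.tendsto r).comp hS).pow 2).const_mul _)
    rw [div_self hr.1.ne', mul_one] at hlim
    refine hlim.congr' ?_
    filter_upwards [hev] with δ hδ
    rw [hd δ hδ.1]

/-- The infimum defining the scattering length of a radial potential equals `4π` times the
minimal radial energy. -/
lemma iInf_scatteringFunctional {ρ : ℝ → ℝ} (hm : Measurable ρ) (hρ : ∀ r, 0 ≤ ρ r)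
    (hq : IsWeight (weightOf ρ)) {t : ℝ} (ht : 0 ≤ t) :
    ⨅ φ : {φ : E3 → ℝ // ContDiff ℝ 1 φ ∧ ∀ x : E3, ‖x‖ = t → φ x = 1},
      scatteringFunctional (fun x => ENNReal.ofReal (ρ ‖x‖)) t φ.1 =
      ENNReal.ofReal (4 * π * radialMin (weightOf ρ) t) := by
  refine le_antisymm ?_ (le_iInf fun φ => le_scatteringFunctional hm hρ hq ht φ.2.1 φ.2.2)
  have H : ∀ b, radialMin (weightOf ρ) t < b →
      ⨅ φ : {φ : E3 → ℝ // ContDiff ℝ 1 φ ∧ ∀ x : E3, ‖x‖ = t → φ x = 1},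
        scatteringFunctional (fun x => ENNReal.ofReal (ρ ‖x‖)) t φ.1 ≤
      ENNReal.ofReal (4 * π * b) := by
    intro b hb
    obtain ⟨f, hf, hft, hfb⟩ := exists_radialEnergy_lt _ t hb
    have hfc := hf.continuous
    -- normalize `f √(r² + δ²)` at `t` and choose `δ` small
    have hval : Tendsto (fun δ : ℝ => f √(t ^ 2 + δ ^ 2)) (𝓝[>] 0) (𝓝 1) := by
      have : Continuous fun δ : ℝ => f √(t ^ 2 + δ ^ 2) := by fun_prop
      have h := (this.tendsto 0).mono_left (nhdsWithin_le_nhds (s := Ioi 0))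
      simpa [Real.sqrt_sq ht, hft] using h
    have hlim : Tendsto (fun δ : ℝ => (f √(t ^ 2 + δ ^ 2))⁻¹ ^ 2 *
        radialEnergy (weightOf ρ) t fun r => f √(r ^ 2 + δ ^ 2)) (𝓝[>] 0)
        (𝓝 (radialEnergy (weightOf ρ) t f)) := by
      simpa using ((hval.inv₀ one_ne_zero).pow 2).mul (tendsto_radialEnergy_sqrt hq ht hf)
    obtain ⟨δ, hδ, hδ0, hδ1⟩ := ((hlim.eventually (gt_mem_nhds hfb)).and
      ((hval.eventually_ne one_ne_zero).and self_mem_nhdsWithin)).exists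
    have hδ1 : 0 < δ := hδ1
    have hne : ∀ r : ℝ, r ^ 2 + δ ^ 2 ≠ 0 := fun r => by positivity
    set G : ℝ → ℝ := fun r => (f √(t ^ 2 + δ ^ 2))⁻¹ * f √(r ^ 2 + δ ^ 2) with hG
    have hGc : ContDiff ℝ 1 G :=
      contDiff_const.mul (hf.comp (((contDiff_id.pow 2).add contDiff_const).sqrt hne))
    have hGc3 : ContDiff ℝ 1 fun x : E3 => G ‖x‖ :=
      contDiff_const.mul (hf.comp (((contDiff_norm_sq ℝ).add contDiff_const).sqrt
        fun x => hne ‖x‖))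
    have hGt : ∀ x : E3, ‖x‖ = t → G ‖x‖ = 1 := fun x hx => by
      rw [hx, hG]
      exact inv_mul_cancel₀ hδ0
    have hGb : radialEnergy (weightOf ρ) t G ≤ b := by
      rw [hG, radialEnergy_const_mul]
      exact hδ.le
    exact iInf_le_of_le ⟨fun x => G ‖x‖, hGc3, hGt⟩
      ((scatteringFunctional_radial_le hm hρ hq ht hGc).trans
        (ENNReal.ofReal_le_ofReal (mul_le_mul_of_nonneg_left hGb (by positivity))))
  have hlim : Tendsto (fun b : ℝ => ENNReal.ofReal (4 * π * b))
      (𝓝[>] (radialMin (weightOf ρ) t)) (𝓝 (ENNReal.ofReal (4 * π * radialMin (weightOf ρ) t))) := by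
    have : Continuous fun b : ℝ => ENNReal.ofReal (4 * π * b) :=
      ENNReal.continuous_ofReal.comp (by fun_prop)
    exact (this.tendsto _).mono_left nhdsWithin_le_nhds
  exact ge_of_tendsto hlim (by filter_upwards [self_mem_nhdsWithin] with b hb using H b hb)

lemma isScatteringLength_iff {ρ : ℝ → ℝ} (hm : Measurable ρ) (hρ : ∀ r, 0 ≤ ρ r)
    (hq : IsWeight (weightOf ρ)) {R a : ℝ} :
    IsScatteringLength (fun x => ENNReal.ofReal (ρ ‖x‖)) R a ↔
      a ∈ Icc 0 R ∧ ∀ t, R < t → radialMin (weightOf ρ) t = a / (1 - a / t) := by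
  refine and_congr_right fun ha => forall_congr' fun t => imp_congr_right fun ht => ?_
  have ht0 : 0 < t := (ha.1.trans ha.2).trans_lt ht
  have h1 : 0 < 1 - a / t := by
    rw [sub_pos, div_lt_one ht0]
    exact ha.2.trans_lt ht
  have hI := radialMin_nonneg hq ht0.le
  have ha0 := ha.1
  rw [iInf_scatteringFunctional hm hρ hq ht0.le, ENNReal.ofReal_eq_ofReal_iff (by positivity)
    (by positivity), mul_div_assoc, mul_right_inj' (by positivity), eq_comm]

/-! ### Truncations -/

lemma le_of_div_le_div {a b t : ℝ} (ha : a < t) (hb : b < t) (ht : 0 < t)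
    (h : a / (1 - a / t) ≤ b / (1 - b / t)) : a ≤ b := by
  have e : ∀ x, x < t → x / (1 - x / t) = x * t / (t - x) := fun x hx => by
    have := sub_pos.2 hx
    field_simp
  rw [e a ha, e b hb, div_le_div_iff₀ (sub_pos.2 ha) (sub_pos.2 hb)] at h
  have h2 : t * t * a ≤ t * t * b := by linarith
  exact le_of_mul_le_mul_left h2 (mul_pos ht ht)

lemma tendsto_div_one_sub (a : ℝ) : Tendsto (fun t : ℝ => a / (1 - a / t)) atTop (𝓝 a) := by
  have h : Tendsto (fun t : ℝ => a / t) atTop (𝓝 0) := tendsto_const_nhds.div_atTop tendsto_id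
  have h1 : Tendsto (fun t : ℝ => 1 - a / t) atTop (𝓝 1) := by simpa using h.const_sub 1
  have h2 : Tendsto (fun t : ℝ => a / (1 - a / t)) atTop (𝓝 (a / 1)) :=
    tendsto_const_nhds.div h1 one_ne_zero
  rwa [div_one] at h2

lemma weightOf_indicator (S : Set ℝ) (ρ : ℝ → ℝ) :
    weightOf (S.indicator ρ) = S.indicator (weightOf ρ) := by
  funext r
  by_cases h : r ∈ S <;> simp [weightOf, h]

lemma IsWeight.indicator {q : ℝ → ℝ} (hq : IsWeight q) {S : Set ℝ} (hS : MeasurableSet S) :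
    IsWeight (S.indicator q) := by
  refine ⟨fun r => indicator_nonneg (fun r _ => hq.nonneg r) r, fun t ht => ?_⟩
  have := hq.integrable t ht
  rw [intervalIntegrable_iff] at this ⊢
  exact this.indicator hS

/-- A radial locally integrable potential is given by a radial profile with an admissible
weight. -/
lemma exists_profile (v : E3 → ℝ) (hmeas : Measurable v) (hnn : ∀ x, 0 ≤ v x) (hrad : Radial v)
    (hloc : LocallyIntegrable v volume) :
    ∃ ρ : ℝ → ℝ, Measurable ρ ∧ (∀ r, 0 ≤ ρ r) ∧ (∀ x, v x = ρ ‖x‖) ∧ IsWeight (weightOf ρ) := by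
  let e : E3 := EuclideanSpace.single 0 1
  have he : ‖e‖ = 1 := by simp [e]
  have hv : ∀ x, v x = v (‖x‖ • e) := fun x => hrad _ _ (by
    rw [norm_smul, he, mul_one, norm_norm])
  refine ⟨fun r => v (r • e), hmeas.comp (by fun_prop : Continuous fun r : ℝ => r • e).measurable,
    fun r => hnn _, hv, fun r => ?_, fun t ht => ?_⟩
  · have := hnn (r • e)
    simp only [weightOf]
    positivity
  · rw [intervalIntegrable_iff_integrableOn_Ioo_of_le ht]
    have h1 : IntegrableOn v (Metric.ball 0 t) volume :=
      (hloc.integrableOn_isCompact (isCompact_closedBall 0 t)).mono_set Metric.ball_subset_closedBall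
    rw [funext hv, integrableOn_fun_norm_addHaar volume (f := fun r : ℝ => v (r • e))] at h1
    have hdim : Module.finrank ℝ E3 - 1 = 2 := by simp
    rw [hdim] at h1
    exact h1.div_const 2

/-- **Lemma 3.4.** Subadditivity of the scattering length under splitting of the
potential into a compactly supported piece and a tail. -/
theorem scatteringLength_subadditive
    (v : E3 → ℝ) (a : ℝ)
    (hmeas : Measurable v) (hnn : ∀ x, 0 ≤ v x) (hrad : Radial v)
    (hloc : LocallyIntegrable v volume)
    (ha : HasScatteringLengthGen (fun x => ENNReal.ofReal (v x)) a) :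
    ∀ R : ℝ, 0 ≤ R →
      ∃ a₁ a₂ : ℝ,
        HasScatteringLengthGen (truncLe (fun x => ENNReal.ofReal (v x)) R) a₁ ∧
        HasScatteringLengthGen (truncGt (fun x => ENNReal.ofReal (v x)) R) a₂ ∧
        0 ≤ max a₁ a₂ ∧ max a₁ a₂ ≤ a ∧ a ≤ a₁ + a₂ := by
  intro R hR
  obtain ⟨ρ, hm, hρ, hv, hq⟩ := exists_profile v hmeas hnn hrad hloc
  obtain ⟨A, hA, hAlim⟩ := ha
  -- `M S t` is the minimal energy for the potential cut off to radii in `S`.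
  set M : Set ℝ → ℝ → ℝ := fun S t => radialMin (S.indicator (weightOf ρ)) t with hM
  have hiff : ∀ {S : Set ℝ}, MeasurableSet S → ∀ {R' b : ℝ},
      IsScatteringLength (fun x => ENNReal.ofReal (S.indicator ρ ‖x‖)) R' b ↔
        b ∈ Icc 0 R' ∧ ∀ t, R' < t → M S t = b / (1 - b / t) := by
    intro S hS R' b
    have hw : IsWeight (weightOf (S.indicator ρ)) := by
      rw [weightOf_indicator]
      exact hq.indicator hS
    rw [isScatteringLength_iff (hm.indicator hS) (indicator_nonneg fun r _ => hρ r) hw,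
      weightOf_indicator]
  have hmono : ∀ {S T : Set ℝ}, MeasurableSet S → MeasurableSet T → S ⊆ T → ∀ {t : ℝ}, 0 ≤ t →
      M S t ≤ M T t := fun hS hT hST _ ht =>
    radialMin_mono (hq.indicator hS) (hq.indicator hT) ht
      fun r => indicator_le_indicator_of_subset hST hq.nonneg r
  have eLe : ∀ R', truncLe (fun x => ENNReal.ofReal (v x)) R' =
      fun x => ENNReal.ofReal ((Iic R').indicator ρ ‖x‖) := by
    intro R'
    funext x
    by_cases h : ‖x‖ ≤ R' <;> simp [truncLe, h, hv]
  have eLeLe : ∀ R', truncLe (truncLe (fun x => ENNReal.ofReal (v x)) R) R' =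
      truncLe (fun x => ENNReal.ofReal (v x)) (min R R') := by
    intro R'
    funext x
    by_cases h : ‖x‖ ≤ R <;> by_cases h' : ‖x‖ ≤ R' <;> simp [truncLe, h, h']
  have eGtLe : ∀ R', truncLe (truncGt (fun x => ENNReal.ofReal (v x)) R) R' =
      fun x => ENNReal.ofReal ((Ioc R R').indicator ρ ‖x‖) := by
    intro R'
    funext x
    by_cases h : R < ‖x‖ <;> by_cases h' : ‖x‖ ≤ R' <;> simp [truncLe, truncGt, h, h', hv]
  have hA' : ∀ R', 0 ≤ R' → A R' ∈ Icc 0 R' ∧ ∀ t, R' < t → M (Iic R') t = A R' / (1 - A R' / t) :=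
    fun R' hR' => (hiff measurableSet_Iic).1 (eLe R' ▸ hA R' hR')
  have hAmono : ∀ R₁ R₂, 0 ≤ R₁ → R₁ ≤ R₂ → A R₁ ≤ A R₂ := by
    intro R₁ R₂ h1 h2
    obtain ⟨m₁, e₁⟩ := hA' R₁ h1
    obtain ⟨m₂, e₂⟩ := hA' R₂ (h1.trans h2)
    have hlt : R₂ < R₂ + 1 := lt_add_one _
    refine le_of_div_le_div (t := R₂ + 1) (by linarith [m₁.2]) (by linarith [m₂.2])
      (by linarith) ?_
    rw [← e₁ _ (h2.trans_lt hlt), ← e₂ _ hlt]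
    exact hmono measurableSet_Iic measurableSet_Iic (Iic_subset_Iic.2 h2) (by linarith)
  have hAle : ∀ R', 0 ≤ R' → A R' ≤ a := fun R' hR' => ge_of_tendsto hAlim (by
    filter_upwards [eventually_ge_atTop R'] with x hx using hAmono R' x hR' hx)
  -- the scattering length of `v` cut off to `R < |x| ≤ R'`
  have hB : ∀ R', 0 ≤ R' → ∃ b ∈ Icc 0 (A R'), ∀ t, R' < t → M (Ioc R R') t = b / (1 - b / t) := by
    intro R' hR'
    obtain ⟨m, e⟩ := hA' R' hR'
    refine exists_radial_scatteringLength (hq.indicator measurableSet_Ioc) m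
      (fun r hr => indicator_of_notMem (fun h => hr.not_ge h.2) _) fun t ht => ?_
    rw [← e t ht]
    exact hmono measurableSet_Ioc measurableSet_Iic Ioc_subset_Iic_self (hR'.trans ht.le)
  choose! B hBmem hBeq using hB
  have hBmono : ∀ R₁ R₂, 0 ≤ R₁ → R₁ ≤ R₂ → B R₁ ≤ B R₂ := by
    intro R₁ R₂ h1 h2
    have m₁ := (hBmem R₁ h1).2.trans (hA' R₁ h1).1.2
    have m₂ := (hBmem R₂ (h1.trans h2)).2.trans (hA' R₂ (h1.trans h2)).1.2
    have hlt : R₂ < R₂ + 1 := lt_add_one _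
    refine le_of_div_le_div (t := R₂ + 1) (by linarith) (by linarith) (by linarith) ?_
    rw [← hBeq R₁ h1 _ (h2.trans_lt hlt), ← hBeq R₂ (h1.trans h2) _ hlt]
    exact hmono measurableSet_Ioc measurableSet_Ioc (Ioc_subset_Ioc_right h2) (by linarith)
  have hBle : ∀ R', 0 ≤ R' → B R' ≤ a := fun R' hR' => (hBmem R' hR').2.trans (hAle R' hR')
  obtain ⟨a₂, ha₂⟩ : ∃ a₂, Tendsto B atTop (𝓝 a₂) := by
    refine ⟨_, (tendsto_atTop_ciSup (f := fun R' => B (max R' 0)) (fun R₁ R₂ h =>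
      hBmono _ _ (le_max_right _ _) (max_le_max_right 0 h)) ⟨a, ?_⟩).congr' ?_⟩
    · rintro _ ⟨R', rfl⟩
      exact hBle _ (le_max_right _ _)
    · filter_upwards [eventually_ge_atTop 0] with R' hR'
      rw [max_eq_left hR']
  have hsub : ∀ R', R ≤ R' → A R' ≤ A R + B R' := by
    intro R' hRR'
    have hR' := hR.trans hRR'
    refine le_of_tendsto_of_tendsto (tendsto_div_one_sub (A R'))
      ((tendsto_div_one_sub (A R)).add (tendsto_div_one_sub (B R'))) ?_
    filter_upwards [eventually_gt_atTop R'] with t ht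
    rw [← (hA' R' hR').2 t ht, ← (hA' R hR).2 t (hRR'.trans_lt ht), ← hBeq R' hR' t ht]
    have e : (Iic R').indicator (weightOf ρ) =
        fun r => (Iic R).indicator (weightOf ρ) r + (Ioc R R').indicator (weightOf ρ) r := by
      rw [← Iic_union_Ioc_eq_Iic hRR', indicator_union_of_disjoint (Iic_disjoint_Ioc le_rfl)]
    simp only [hM]
    rw [e]
    exact radialMin_add_le (hq.indicator measurableSet_Iic) (hq.indicator measurableSet_Ioc)
      (hR'.trans ht.le)
  refine ⟨A R, a₂, ⟨fun R' => A (min R R'), fun R' hR' => ?_, ?_⟩, ⟨B, fun R' hR' => ?_, ha₂⟩,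
    (hA' R hR).1.1.trans (le_max_left _ _), max_le (hAle R hR) ?_, ?_⟩
  · rw [eLeLe]
    obtain ⟨m, e⟩ := hA (min R R') (le_min hR hR')
    exact ⟨⟨m.1, m.2.trans (min_le_right _ _)⟩, fun t ht => e t ((min_le_right _ _).trans_lt ht)⟩
  · refine tendsto_const_nhds.congr' ?_
    filter_upwards [eventually_ge_atTop R] with R' hR'
    rw [min_eq_left hR']
  · rw [eGtLe, hiff measurableSet_Ioc]
    exact ⟨⟨(hBmem R' hR').1, (hBmem R' hR').2.trans (hA' R' hR').1.2⟩, hBeq R' hR'⟩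
  · exact le_of_tendsto ha₂ (by
      filter_upwards [eventually_ge_atTop 0] with R' hR' using hBle R' hR')
  · exact le_of_tendsto_of_tendsto hAlim (ha₂.const_add (A R)) (by
      filter_upwards [eventually_ge_atTop R] with R' hR' using hsub R' hR')
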